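/- arXiv:2510.01943 — 8 statements merged into one kernel-verified Lean document; each statement's English description precedes it below -/
import Mathlib

section
/- Let X ⊆ ℝ^d be a nonempty compact convex set, L > 0, and let f : ℝ^d → ℝ be differentiable with L-Lipschitz gradient on X. Define the Moreau envelope M(x) = inf_{y∈X} { f(y) + L‖y − x‖² } (i.e., with λ = 1/(2L)). Then for every x ∈ ℝ^d the infimum is attained at a unique point p(x) ∈ X, and M is 2L-smooth in the sense that for all x, y ∈ ℝ^d: M(y) ≤ M(x) + 2L⟨x − p(x), y − x⟩ + L‖y − x‖². -/
/-!
Existence of the minimizer is compactness plus continuity of `f` on `X`. Uniqueness comes from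
the first-order condition `0 ≤ ⟪f' p + 2L(p - x), y - p⟫` on the convex set `X`
(`first_order_condition`): adding it for two minimizers `p, q`, each tested against the other,
gives `2L‖p - q‖² ≤ ⟪f' p - f' q, q - p⟫ ≤ L‖p - q‖²`, hence `p = q`.
For the smoothness bound, `p x` is a competitor in the problem defining `M y`, so
`M y ≤ f (p x) + L‖p x - y‖²`, and expanding the square around `x` gives exactly the right side.
-/

open scoped RealInnerProductSpace

theorem first_order_condition {E : Type*} [NormedAddCommGroup E] [InnerProductSpace ℝ E]
    [CompleteSpace E] {X : Set E} (hX : Convex ℝ X) {L : ℝ} {f : E → ℝ} {g x p : E}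
    (hp : p ∈ X) (hf : HasGradientAt f g p)
    (hmin : ∀ y ∈ X, f p + L * ‖p - x‖ ^ 2 ≤ f y + L * ‖y - x‖ ^ 2) {y : E} (hy : y ∈ X) :
    0 ≤ ⟪g, y - p⟫ + 2 * L * ⟪p - x, y - p⟫ := by
  have hloc : IsLocalMinOn (fun z => f z + L * ‖z - x‖ ^ 2) X p :=
    IsMinOn.localize fun z hz => hmin z hz
  have hder := hf.hasFDerivAt.add
    ((((hasFDerivAt_id (𝕜 := ℝ) p).sub_const x).norm_sq).const_mul L)
  have h := hloc.hasFDerivWithinAt_nonneg hder.hasFDerivWithinAt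
    (sub_mem_posTangentConeAt_of_segment_subset (hX.segment_subset hp hy))
  simp at h
  simp only [inner_sub_left, inner_sub_right] at h ⊢
  linarith

/-- for an `L`-smooth `f` on a nonempty compact convex `X`, the proximal
subproblem `y ↦ f(y) + L‖y − x‖²` (i.e. `λ = 1/(2L)`) has a unique minimizer `p x ∈ X`
for every `x`, and the Moreau envelope `M(x) = f(p x) + L‖p x − x‖²` is `2L`-smooth:
`M(y) ≤ M(x) + 2L⟪x − p x, y − x⟫ + L‖y − x‖²`. -/
theorem moreau_envelope_exists_unique_prox_and_smooth {d : ℕ}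
    (X : Set (EuclideanSpace ℝ (Fin d))) (hXne : X.Nonempty)
    (hXc : IsCompact X) (hXconv : Convex ℝ X)
    (L : ℝ) (hL : 0 < L)
    (f : EuclideanSpace ℝ (Fin d) → ℝ)
    (f' : EuclideanSpace ℝ (Fin d) → EuclideanSpace ℝ (Fin d))
    (hdiff : ∀ w ∈ X, HasGradientAt f (f' w) w)
    (hlip : ∀ u ∈ X, ∀ v ∈ X, ‖f' u - f' v‖ ≤ L * ‖u - v‖) :
    ∃ p : EuclideanSpace ℝ (Fin d) → EuclideanSpace ℝ (Fin d),
      (∀ x : EuclideanSpace ℝ (Fin d),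
        p x ∈ X ∧
        (∀ y ∈ X, f (p x) + L * ‖p x - x‖ ^ 2 ≤ f y + L * ‖y - x‖ ^ 2) ∧
        (∀ q ∈ X, (∀ y ∈ X, f q + L * ‖q - x‖ ^ 2 ≤ f y + L * ‖y - x‖ ^ 2) → q = p x)) ∧
      (∀ x y : EuclideanSpace ℝ (Fin d),
        f (p y) + L * ‖p y - y‖ ^ 2 ≤
          (f (p x) + L * ‖p x - x‖ ^ 2) + 2 * L * ⟪x - p x, y - x⟫ + L * ‖y - x‖ ^ 2) := by
  have hcont : ContinuousOn f X := fun w hw => (hdiff w hw).continuousAt.continuousWithinAt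
  have hex : ∀ x : EuclideanSpace ℝ (Fin d), ∃ p ∈ X,
      ∀ y ∈ X, f p + L * ‖p - x‖ ^ 2 ≤ f y + L * ‖y - x‖ ^ 2 := fun x =>
    hXc.exists_isMinOn hXne
      (f := fun y => f y + L * ‖y - x‖ ^ 2) (hcont.add (by fun_prop))
  choose p hpX hpmin using hex
  refine ⟨p, fun x => ⟨hpX x, hpmin x, fun q hq hqmin => ?_⟩, fun x y => ?_⟩
  · have h1 := first_order_condition hXconv (hpX x) (hdiff _ (hpX x)) (hpmin x) hq
    have h2 := first_order_condition hXconv hq (hdiff _ hq) hqmin (hpX x)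
    have h3 : ⟪f' (p x) - f' q, q - p x⟫ ≤ L * ‖q - p x‖ ^ 2 := by
      refine (real_inner_le_norm _ _).trans ?_
      have := mul_le_mul_of_nonneg_right (hlip _ (hpX x) _ hq) (norm_nonneg (q - p x))
      rw [norm_sub_rev (p x) q] at this
      linarith
    have h4 : ⟪f' (p x), q - p x⟫ + 2 * L * ⟪p x - x, q - p x⟫ +
        (⟪f' q, p x - q⟫ + 2 * L * ⟪q - x, p x - q⟫) =
        ⟪f' (p x) - f' q, q - p x⟫ - 2 * L * ‖q - p x‖ ^ 2 := by
      rw [← real_inner_self_eq_norm_sq]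
      simp only [inner_sub_left, inner_sub_right]
      ring
    have h5 : ‖q - p x‖ ^ 2 ≤ 0 := by
      by_contra! h
      have := mul_pos hL h
      linarith
    have h6 : ‖q - p x‖ = 0 := pow_eq_zero_iff two_ne_zero |>.1 (le_antisymm h5 (sq_nonneg _))
    exact sub_eq_zero.1 (norm_eq_zero.1 h6)
  · have h := hpmin y (p x) (hpX x)
    have hexp : ‖p x - y‖ ^ 2 = ‖p x - x‖ ^ 2 + 2 * ⟪x - p x, y - x⟫ + ‖y - x‖ ^ 2 := by
      simp only [← real_inner_self_eq_norm_sq, inner_sub_left, inner_sub_right]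
      rw [real_inner_comm x (p x), real_inner_comm y (p x), real_inner_comm y x]
      ring
    rw [hexp] at h
    linarith
end

section
/- Let X ⊆ ℝ^d be a closed convex set, L > 0, γ ∈ (0,1], and let f : ℝ^d → ℝ be L-smooth on X and γ-quasar convex on X with center x* ∈ X. Let 0 < λ < 1/L and define M(x) = min_{y∈X} { f(y) + (1/(2λ))‖y − x‖² }, whose minimizer p(x) ∈ X exists and is unique for each x ∈ X. Then M is γ-quasar convex on X with respect to x*: M(x*) = f(x*), and for every x ∈ X, M(x*) ≥ M(x) + (1/γ)·(1/λ)·⟨x − p(x), x* − x⟩. -/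
open scoped RealInnerProductSpace

/-!
Write `p = p(x)`. A minimizer of `f + (1/(2λ))‖· - x‖²` over the convex set `X` satisfies the
first-order condition `⟪f' p + (p - x)/λ, y - p⟫ ≥ 0` for `y ∈ X` (`prox_variational`). Taking
`y = x*` and inserting this in the quasar convexity of `f` at `p` gives
`f x* ≥ f p + (1/(γλ)) (⟪x - p, x* - x⟫ + ‖x - p‖²)`, and `1/(γλ) ≥ 1/(2λ)` because `γ ≤ 1`.

Existence of `p` holds because `f` is bounded below on `X` by `f x*`, which makes the objective
coercive. Uniqueness follows by adding the first-order conditions at two minimizers `p, q`: they give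
`‖p - q‖²/λ ≤ ⟪f' p - f' q, q - p⟫ ≤ L‖p - q‖²`, while `L < 1/λ`.
-/

/-- First-order optimality condition for the proximal subproblem over a convex set. -/
lemma prox_variational {d : ℕ} {X : Set (EuclideanSpace ℝ (Fin d))} (hXconv : Convex ℝ X)
    {f : EuclideanSpace ℝ (Fin d) → ℝ} {g p x : EuclideanSpace ℝ (Fin d)} {lam : ℝ}
    (hp : p ∈ X) (hg : HasGradientAt f g p)
    (hmin : ∀ y ∈ X, f p + (1 / (2 * lam)) * ‖p - x‖ ^ 2 ≤
      f y + (1 / (2 * lam)) * ‖y - x‖ ^ 2) {y : EuclideanSpace ℝ (Fin d)} (hy : y ∈ X) :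
    0 ≤ ⟪g, y - p⟫ + (1 / lam) * ⟪p - x, y - p⟫ := by
  have hd := hg.hasFDerivAt.add
    ((((hasFDerivAt_id p).sub_const x).norm_sq).const_mul (1 / (2 * lam)))
  have hloc : IsLocalMinOn (fun y => f y + (1 / (2 * lam)) * ‖y - x‖ ^ 2) X p :=
    IsMinOn.localize (fun y hy => hmin y hy)
  have h := hloc.hasFDerivWithinAt_nonneg hd.hasFDerivWithinAt
    (sub_mem_posTangentConeAt_of_segment_subset (hXconv.segment_subset hp hy))
  have h2 : 0 ≤ ⟪g, y - p⟫ + (1 / (2 * lam)) * (2 * ⟪p - x, y - p⟫) := by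
    simpa [inner_sub_left] using h
  have e : (1 / (2 * lam)) * (2 * ⟪p - x, y - p⟫) = (1 / lam) * ⟪p - x, y - p⟫ := by
    by_cases h0 : lam = 0
    · simp [h0]
    · field_simp
  rwa [e] at h2

/-- The proximal subproblem over a closed set has a solution when `f` is bounded below there. -/
lemma prox_exists {d : ℕ} {X : Set (EuclideanSpace ℝ (Fin d))} (hXcl : IsClosed X)
    {f : EuclideanSpace ℝ (Fin d) → ℝ} (hf : ContinuousOn f X) {m lam : ℝ}
    (hm : ∀ w ∈ X, m ≤ f w) (hlam : 0 < lam) {x : EuclideanSpace ℝ (Fin d)} (hx : x ∈ X) :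
    ∃ p ∈ X, ∀ y ∈ X, f p + (1 / (2 * lam)) * ‖p - x‖ ^ 2 ≤
      f y + (1 / (2 * lam)) * ‖y - x‖ ^ 2 := by
  have hc : ContinuousOn (fun y => f y + (1 / (2 * lam)) * ‖y - x‖ ^ 2) X :=
    hf.add (by fun_prop)
  -- Beyond this radius the quadratic term alone exceeds `f x - m`.
  set R := Real.sqrt (2 * lam * (f x - m)) with hR
  have hR2 : R ^ 2 = 2 * lam * (f x - m) :=
    Real.sq_sqrt (mul_nonneg (by positivity) (by linarith [hm x hx]))
  obtain ⟨p, hp, hpm⟩ := hc.exists_isMinOn' hXcl hx (by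
    filter_upwards [Filter.mem_inf_of_left
      (isCompact_closedBall x R).compl_mem_cocompact,
      Filter.mem_inf_of_right (Filter.mem_principal_self X)] with y hy hyX
    have hy' : R < ‖y - x‖ := by simpa [dist_eq_norm] using hy
    have h1 : R ^ 2 ≤ ‖y - x‖ ^ 2 := by
      have := Real.sqrt_nonneg (2 * lam * (f x - m))
      gcongr
    have h2 : (1 / (2 * lam)) * R ^ 2 ≤ (1 / (2 * lam)) * ‖y - x‖ ^ 2 := by gcongr
    have h3 : (1 / (2 * lam)) * R ^ 2 = f x - m := by rw [hR2]; field_simp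
    have := hm y hyX
    simp only [sub_self, norm_zero]
    linarith)
  exact ⟨p, hp, fun y hy => hpm hy⟩

/-- the Moreau envelope `M(x) = min_{y∈X} f(y) + (1/(2λ))‖y − x‖²` of an
`L`-smooth, `γ`-quasar convex function (center `x*`) with `0 < λ < 1/L` has a unique
proximal point `p x ∈ X` for every `x ∈ X`, satisfies `M(x*) = f(x*)`, and is
`γ`-quasar convex on `X` with respect to `x*`, its gradient at `x` being `(1/λ)(x − p x)`. -/
theorem moreau_envelope_quasar_convex {d : ℕ}
    (X : Set (EuclideanSpace ℝ (Fin d))) (hXcl : IsClosed X) (hXconv : Convex ℝ X)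
    (L γ : ℝ) (hL : 0 < L) (hγ : γ ∈ Set.Ioc (0 : ℝ) 1)
    (f : EuclideanSpace ℝ (Fin d) → ℝ)
    (f' : EuclideanSpace ℝ (Fin d) → EuclideanSpace ℝ (Fin d))
    (hdiff : ∀ w ∈ X, HasGradientAt f (f' w) w)
    (hsmooth : ∀ u ∈ X, ∀ v ∈ X, ‖f' u - f' v‖ ≤ L * ‖u - v‖)
    (xstar : EuclideanSpace ℝ (Fin d)) (hxstar : xstar ∈ X)
    (hmin : ∀ w ∈ X, f xstar ≤ f w)
    (hquasar : ∀ w ∈ X, f w + (1 / γ) * ⟪f' w, xstar - w⟫ ≤ f xstar)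
    (lam : ℝ) (hlam : 0 < lam) (hlamL : lam < 1 / L) :
    ∃ p : EuclideanSpace ℝ (Fin d) → EuclideanSpace ℝ (Fin d),
      (∀ x ∈ X,
        p x ∈ X ∧
        (∀ y ∈ X, f (p x) + (1 / (2 * lam)) * ‖p x - x‖ ^ 2 ≤
          f y + (1 / (2 * lam)) * ‖y - x‖ ^ 2) ∧
        (∀ q ∈ X, (∀ y ∈ X, f q + (1 / (2 * lam)) * ‖q - x‖ ^ 2 ≤
          f y + (1 / (2 * lam)) * ‖y - x‖ ^ 2) → q = p x)) ∧
      f (p xstar) + (1 / (2 * lam)) * ‖p xstar - xstar‖ ^ 2 = f xstar ∧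
      (∀ x ∈ X,
        f (p xstar) + (1 / (2 * lam)) * ‖p xstar - xstar‖ ^ 2 ≥
          (f (p x) + (1 / (2 * lam)) * ‖p x - x‖ ^ 2) +
            (1 / γ) * ((1 / lam) * ⟪x - p x, xstar - x⟫)) := by
  obtain ⟨hγ0, hγ1⟩ := hγ
  have hf : ContinuousOn f X := fun w hw => (hdiff w hw).continuousAt.continuousWithinAt
  have hex := fun x (hx : x ∈ X) => prox_exists hXcl hf hmin hlam hx
  choose! p hpX hpm using hex
  have hstar : f (p xstar) + (1 / (2 * lam)) * ‖p xstar - xstar‖ ^ 2 = f xstar := by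
    apply le_antisymm
    · simpa using hpm xstar hxstar xstar hxstar
    · have h1 := hmin _ (hpX xstar hxstar)
      have h2 : 0 ≤ (1 / (2 * lam)) * ‖p xstar - xstar‖ ^ 2 := by positivity
      linarith
  refine ⟨p, fun x hx => ⟨hpX x hx, hpm x hx, fun q hq hqm => ?_⟩, hstar, fun x hx => ?_⟩
  · have h1 := prox_variational hXconv (hpX x hx) (hdiff _ (hpX x hx)) (hpm x hx) hq
    have h2 := prox_variational hXconv hq (hdiff _ hq) hqm (hpX x hx)
    have h3 : ⟪f' (p x) - f' q, q - p x⟫ ≤ L * ‖q - p x‖ ^ 2 := by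
      refine (real_inner_le_norm _ _).trans ?_
      have := hsmooth _ (hpX x hx) _ hq
      rw [norm_sub_rev (p x) q] at this
      nlinarith [norm_nonneg (q - p x)]
    have e1 : ⟪f' q, p x - q⟫ = -⟪f' q, q - p x⟫ := by rw [← inner_neg_right, neg_sub]
    have e2 : ⟪q - x, p x - q⟫ = -⟪p x - x, q - p x⟫ - ‖q - p x‖ ^ 2 := by
      rw [← real_inner_self_eq_norm_sq, ← neg_sub q (p x), inner_neg_right,
        show q - x = (p x - x) + (q - p x) by abel, inner_add_left]
      ring
    rw [e1, e2] at h2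
    rw [inner_sub_left] at h3
    have hL' : L < 1 / lam := by
      rw [lt_div_iff₀ hlam]; rw [lt_div_iff₀ hL] at hlamL; linarith
    have h4 : (1 / lam - L) * ‖q - p x‖ ^ 2 ≤ 0 := by linarith
    have h5 : ‖q - p x‖ ^ 2 ≤ 0 := by
      by_contra hcon
      push Not at hcon
      nlinarith [mul_pos (sub_pos.2 hL') hcon]
    have h6 : ‖q - p x‖ = 0 := by
      have := le_antisymm h5 (sq_nonneg _)
      simpa using this
    exact sub_eq_zero.1 (norm_eq_zero.1 h6)
  · rw [hstar, ge_iff_le]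
    have h1 := prox_variational hXconv (hpX x hx) (hdiff _ (hpX x hx)) (hpm x hx) hxstar
    have h2 := hquasar _ (hpX x hx)
    have e : ⟪p x - x, xstar - p x⟫ = -⟪x - p x, xstar - x⟫ - ‖p x - x‖ ^ 2 := by
      rw [← real_inner_self_eq_norm_sq, ← neg_sub (p x) x, inner_neg_left,
        show xstar - p x = (xstar - x) - (p x - x) by abel, inner_sub_right]
      ring
    rw [e] at h1
    have h3 := mul_nonneg (one_div_pos.2 hγ0).le h1
    have h4 : (1 / (2 * lam)) * ‖p x - x‖ ^ 2 ≤ (1 / γ) * ((1 / lam) * ‖p x - x‖ ^ 2) := by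
      have hγ' : 1 ≤ 1 / γ := (one_le_div hγ0).2 hγ1
      have h5 : 0 ≤ (1 / lam) * ‖p x - x‖ ^ 2 := by positivity
      have h6 : (1 / (2 * lam)) * ‖p x - x‖ ^ 2 = ((1 / lam) * ‖p x - x‖ ^ 2) / 2 := by
        field_simp
      nlinarith
    linarith
end

section
/- Let g : [0,1] → ℝ be differentiable with L̂-Lipschitz derivative for some L̂ > 0, let δ₁ > 0, δ₂ ≥ 0, c ≥ 0, and let h, ĥ : [0,1] → ℝ be functions satisfying g(α) ≤ h(α) ≤ g(α) + δ₁ and |g′(α) − ĥ(α)| ≤ δ₂ for every α ∈ [0,1]. Then there exists α ∈ [0,1] such that α·ĥ(α) ≤ c·(h(1) − h(α)) + δ₂ + (9 + 5c)·δ₁. -/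
/-!
A global minimizer `α` of `g` on `[0,1]` satisfies the claim. Moving from `α` towards `0` stays in
the interval, so the first-order condition gives `-α * g' α ≥ 0`, hence `α * ĥ(α) ≤ δ₂`; and
`g α ≤ g 1` gives `h 1 - h α ≥ -δ₁`, a loss of at most `c * δ₁`, absorbed by `(9 + 5c) * δ₁`.
-/

/-- noisy binary line search guarantee. If `g : [0,1] → ℝ` has an
`L̂`-Lipschitz derivative on `[0,1]` and `h, ĥ` are `δ₁`- and `δ₂`-accurate oracles
for `g` and `g'` respectively, then there exists `α ∈ [0,1]` with
`α·ĥ(α) ≤ c·(h(1) − h(α)) + δ₂ + (9 + 5c)·δ₁`. -/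
theorem noisy_binary_line_search {g g' h hhat : ℝ → ℝ} {Lhat δ₁ δ₂ c : ℝ}
    (hLhat : 0 < Lhat) (hδ₁ : 0 < δ₁) (hδ₂ : 0 ≤ δ₂) (hc : 0 ≤ c)
    (hderiv : ∀ α ∈ Set.Icc (0 : ℝ) 1, HasDerivWithinAt g (g' α) (Set.Icc (0 : ℝ) 1) α)
    (hlip : ∀ α ∈ Set.Icc (0 : ℝ) 1, ∀ β ∈ Set.Icc (0 : ℝ) 1,
      |g' α - g' β| ≤ Lhat * |α - β|)
    (hh : ∀ α ∈ Set.Icc (0 : ℝ) 1, g α ≤ h α ∧ h α ≤ g α + δ₁)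
    (hhhat : ∀ α ∈ Set.Icc (0 : ℝ) 1, |g' α - hhat α| ≤ δ₂) :
    ∃ α ∈ Set.Icc (0 : ℝ) 1,
      α * hhat α ≤ c * (h 1 - h α) + δ₂ + (9 + 5 * c) * δ₁ := by
  have hcont : ContinuousOn g (Set.Icc (0 : ℝ) 1) := fun x hx => (hderiv x hx).continuousWithinAt
  obtain ⟨α, hα, hmin⟩ :=
    isCompact_Icc.exists_isMinOn (Set.nonempty_Icc.2 zero_le_one) hcont
  have h1 : (1 : ℝ) ∈ Set.Icc (0 : ℝ) 1 := ⟨zero_le_one, le_rfl⟩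
  have h0 : (0 : ℝ) ∈ Set.Icc (0 : ℝ) 1 := ⟨le_rfl, zero_le_one⟩
  -- First-order optimality in the feasible direction `0 - α`, covering the endpoints as well.
  have hfirst : α * g' α ≤ 0 := by
    have hdir := hmin.localize.hasFDerivWithinAt_nonneg (hderiv α hα).hasFDerivWithinAt
      (sub_mem_posTangentConeAt_of_segment_subset ((convex_Icc (0 : ℝ) 1).segment_subset hα h0))
    simpa using hdir
  refine ⟨α, hα, ?_⟩
  have hslope : α * hhat α ≤ δ₂ := by
    have hnear : hhat α ≤ g' α + δ₂ := by linarith [(abs_le.1 (hhhat α hα)).1]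
    nlinarith [mul_le_mul_of_nonneg_left hnear hα.1, mul_le_mul_of_nonneg_right hα.2 hδ₂]
  have hval : -δ₁ ≤ h 1 - h α := by
    have hg : g α ≤ g 1 := hmin h1
    linarith [(hh 1 h1).1, (hh α hα).2]
  nlinarith [mul_le_mul_of_nonneg_left hval hc, mul_nonneg hc hδ₁.le]
end

section
/- Let g : [0,1] → ℝ be differentiable on [0,1] and let c ≥ 0. Then there exists α ∈ [0,1] such that α·g′(α) ≤ c·(g(1) − g(α)). -/
/-- exact line-search target condition. For any `g` differentiable on
`[0,1]` and any `c ≥ 0` there is `α ∈ [0,1]` with `α·g'(α) ≤ c·(g(1) − g(α))`. -/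
theorem exact_line_search_target {g g' : ℝ → ℝ} {c : ℝ} (hc : 0 ≤ c)
    (hderiv : ∀ α ∈ Set.Icc (0 : ℝ) 1, HasDerivWithinAt g (g' α) (Set.Icc (0 : ℝ) 1) α) :
    ∃ α ∈ Set.Icc (0 : ℝ) 1, α * g' α ≤ c * (g 1 - g α) := by
  -- Any global minimizer of `g` works: the right-hand side is nonnegative there, and the
  -- derivative in the feasible direction `0 - α` gives `-α * g' α ≥ 0`.
  obtain ⟨α, hα, hmin⟩ := isCompact_Icc.exists_isMinOn (Set.nonempty_Icc.2 zero_le_one)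
    (fun x hx => (hderiv x hx).continuousWithinAt)
  refine ⟨α, hα, ?_⟩
  have h0 : (0 : ℝ) ∈ Set.Icc (0 : ℝ) 1 := Set.left_mem_Icc.2 zero_le_one
  have hdir := hmin.localize.hasFDerivWithinAt_nonneg (hderiv α hα).hasFDerivWithinAt
    (sub_mem_posTangentConeAt_of_segment_subset ((convex_Icc 0 1).segment_subset hα h0))
  have h1 : g α ≤ g 1 := hmin (Set.right_mem_Icc.2 zero_le_one)
  have hrhs : 0 ≤ c * (g 1 - g α) := mul_nonneg hc (sub_nonneg.2 h1)
  simp at hdir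
  linarith
end

section
/- Let X ⊆ ℝ^d be a compact convex set, L > 0, γ ∈ (0,1], and let f : ℝ^d → ℝ be L-smooth on X and γ-quasar convex on X with center x* ∈ X. Let x₀ ∈ X and define the projected gradient descent iterates x_{t+1} = argmin_{y∈X} { f(x_t) + ⟨∇f(x_t), y − x_t⟩ + (L/2)‖y − x_t‖² } (equivalently, x_{t+1} is the Euclidean projection of x_t − (1/L)∇f(x_t) onto X). Let D be the diameter of the sublevel set { x ∈ X : f(x) ≤ f(x₀) }. Then for all t ≥ 1: f(x_t) − f(x*) ≤ 20LD² / ((t+1)γ²). -/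
open scoped RealInnerProductSpace

/-!
Write `δ t = f (x t) - f xstar` and `a = L * D ^ 2`. Smoothness makes `f` differ from its
linearization by at most `(L / 2) * ‖y - x‖ ^ 2` on `X` (`abs_sub_linearization_le`). Hence
`f (x (t + 1))` lies below the quadratic model at `x t`, evaluated at any point of `X`.

* Evaluating at `x t` shows that `f ∘ x` is antitone, so all iterates stay in the initial sublevel
  set and `‖xstar - x t‖ ≤ D`.
* Evaluating at `xstar` and using the lower half of the smoothness estimate gives `δ (t + 1) ≤ a`,
  independently of `δ t` and of quasar convexity.
* Evaluating at `x t + s • (xstar - x t)` and using quasar convexity gives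
  `δ (t + 1) ≤ δ t - s * γ * δ t + s ^ 2 * a / 2` for `s ∈ [0, 1]`. Once `δ t ≤ a`, the optimal
  choice `s = γ * δ t / a` is admissible and gives `δ (t + 1) ≤ δ t - γ ^ 2 * δ t ^ 2 / (2 * a)`.

For `u t = γ ^ 2 * δ t / (2 * a)` this reads `u (t + 1) ≤ u t - u t ^ 2` with `u 1 ≤ 1 / 2`, so
`u t ≤ 1 / (t + 1)`, which is the claim with constant `2` in place of `20`.
-/

/-- A function whose gradient is `L`-Lipschitz on a convex set deviates from its linearizations
by at most a quadratic, in both directions. -/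
lemma abs_sub_linearization_le {E : Type*} [NormedAddCommGroup E] [InnerProductSpace ℝ E]
    [CompleteSpace E] {X : Set E} (hX : Convex ℝ X) {L : ℝ} {f : E → ℝ} {f' : E → E}
    (hdiff : ∀ w ∈ X, HasGradientAt f (f' w) w)
    (hsmooth : ∀ u ∈ X, ∀ v ∈ X, ‖f' u - f' v‖ ≤ L * ‖u - v‖)
    {x y : E} (hx : x ∈ X) (hy : y ∈ X) :
    |f y - f x - ⟪f' x, y - x⟫| ≤ L / 2 * ‖y - x‖ ^ 2 := by
  have hseg : ∀ s ∈ Set.Icc (0 : ℝ) 1, x + s • (y - x) ∈ X := fun s hs =>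
    hX.add_smul_sub_mem hx hy hs
  have hder : ∀ s ∈ Set.Icc (0 : ℝ) 1,
      HasDerivAt (fun s : ℝ => f (x + s • (y - x)) - f x - s * ⟪f' x, y - x⟫)
        (⟪f' (x + s • (y - x)) - f' x, y - x⟫) s := by
    intro s hs
    have h1 : HasDerivAt (fun s : ℝ => x + s • (y - x)) (y - x) s := by
      simpa using ((hasDerivAt_id s).smul_const (y - x)).const_add x
    have h2 := (hdiff _ (hseg s hs)).hasFDerivAt.comp_hasDerivAt s h1
    have h3 := (h2.sub_const (f x)).sub ((hasDerivAt_id s).mul_const ⟪f' x, y - x⟫)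
    refine h3.congr_deriv ?_
    simp [inner_sub_left]
  have key := image_norm_le_of_norm_deriv_right_le_deriv_boundary
    (f := fun s : ℝ => f (x + s • (y - x)) - f x - s * ⟪f' x, y - x⟫)
    (f' := fun s => ⟪f' (x + s • (y - x)) - f' x, y - x⟫) (a := 0) (b := 1)
    (B := fun s => L / 2 * ‖y - x‖ ^ 2 * s ^ 2) (B' := fun s => L * ‖y - x‖ ^ 2 * s)
    (fun s hs => (hder s hs).continuousAt.continuousWithinAt)
    (fun s hs => (hder s (Set.Ico_subset_Icc_self hs)).hasDerivWithinAt)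
    (by simp)
    (fun s => by
      have := ((hasDerivAt_id s).pow 2).const_mul (L / 2 * ‖y - x‖ ^ 2)
      refine this.congr_deriv ?_
      simp
      ring)
    (fun s hs => by
      have h1 := hsmooth _ (hseg s (Set.Ico_subset_Icc_self hs)) x hx
      rw [add_sub_cancel_left, norm_smul, Real.norm_of_nonneg hs.1] at h1
      calc ‖⟪f' (x + s • (y - x)) - f' x, y - x⟫‖
          ≤ ‖f' (x + s • (y - x)) - f' x‖ * ‖y - x‖ := norm_inner_le_norm _ _
        _ ≤ L * (s * ‖y - x‖) * ‖y - x‖ := by gcongr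
        _ = L * ‖y - x‖ ^ 2 * s := by ring)
  have := key (Set.right_mem_Icc.2 zero_le_one)
  simpa using this

/-- The map `u ↦ u - u ^ 2` is increasing on `[0, 1 / 2]` and sends `1 / n` below `1 / (n + 1)`. -/
lemma sub_sq_le_one_div_succ {u n : ℝ} (hn : 2 ≤ n) (hun : u ≤ 1 / n) :
    u - u ^ 2 ≤ 1 / (n + 1) := by
  have hn2 : 1 / n ≤ 1 / 2 := one_div_le_one_div_of_le (by norm_num) hn
  have h1 : u - u ^ 2 ≤ 1 / n - (1 / n) ^ 2 := by
    nlinarith [mul_nonneg (sub_nonneg.2 hun) (by linarith : 0 ≤ 1 - u - 1 / n)]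
  refine h1.trans ?_
  have hnp : 0 < n := by linarith
  have : 1 / n - (1 / n) ^ 2 = 1 / (n + 1) - 1 / (n ^ 2 * (n + 1)) := by
    field_simp
    ring
  rw [this]
  have : 0 ≤ 1 / (n ^ 2 * (n + 1)) := by positivity
  linarith

/-- projected gradient descent rate for `L`-smooth `γ`-quasar convex
functions on a compact convex set. With step size `1/L` and `D` the diameter of the
sublevel set of `x₀`, it holds `f(x_t) − f(x*) ≤ 20LD²/((t+1)γ²)` for all `t ≥ 1`. -/
theorem projected_gradient_descent_quasar_convex_rate {d : ℕ}
    (X : Set (EuclideanSpace ℝ (Fin d))) (hXc : IsCompact X) (hXconv : Convex ℝ X)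
    (L γ : ℝ) (hL : 0 < L) (hγ : γ ∈ Set.Ioc (0 : ℝ) 1)
    (f : EuclideanSpace ℝ (Fin d) → ℝ)
    (f' : EuclideanSpace ℝ (Fin d) → EuclideanSpace ℝ (Fin d))
    (hdiff : ∀ w ∈ X, HasGradientAt f (f' w) w)
    (hsmooth : ∀ u ∈ X, ∀ v ∈ X, ‖f' u - f' v‖ ≤ L * ‖u - v‖)
    (xstar : EuclideanSpace ℝ (Fin d)) (hxstar : xstar ∈ X)
    (hmin : ∀ w ∈ X, f xstar ≤ f w)
    (hquasar : ∀ w ∈ X, f w + (1 / γ) * ⟪f' w, xstar - w⟫ ≤ f xstar)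
    (x : ℕ → EuclideanSpace ℝ (Fin d)) (hx0 : x 0 ∈ X)
    -- PGD update: x_{t+1} minimizes the quadratic model over X
    (hiter : ∀ t : ℕ, x (t + 1) ∈ X ∧
      ∀ w ∈ X,
        f (x t) + ⟪f' (x t), x (t + 1) - x t⟫ + (L / 2) * ‖x (t + 1) - x t‖ ^ 2 ≤
          f (x t) + ⟪f' (x t), w - x t⟫ + (L / 2) * ‖w - x t‖ ^ 2)
    (D : ℝ) (hD : D = Metric.diam {w ∈ X | f w ≤ f (x 0)}) :
    ∀ t : ℕ, 1 ≤ t →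
      f (x t) - f xstar ≤ 20 * L * D ^ 2 / (((t : ℝ) + 1) * γ ^ 2) := by
  obtain ⟨hγ0, hγ1⟩ := hγ
  have hxX : ∀ t, x t ∈ X := by
    intro t
    cases t with
    | zero => exact hx0
    | succ t => exact (hiter t).1
  have hmodel : ∀ t, ∀ w ∈ X,
      f (x (t + 1)) ≤ f (x t) + ⟪f' (x t), w - x t⟫ + (L / 2) * ‖w - x t‖ ^ 2 := by
    intro t w hw
    have h1 := (abs_le.1 (abs_sub_linearization_le hXconv hdiff hsmooth (hxX t) (hxX (t + 1)))).2
    have h2 := (hiter t).2 w hw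
    linarith
  have hanti : Antitone fun t => f (x t) := by
    refine antitone_nat_of_succ_le fun t => ?_
    simpa using hmodel t (x t) (hxX t)
  have hdist : ∀ t, ‖xstar - x t‖ ≤ D := by
    intro t
    rw [hD, ← dist_eq_norm]
    exact Metric.dist_le_diam_of_mem (hXc.isBounded.subset fun w hw => hw.1)
      ⟨hxstar, hmin _ hx0⟩ ⟨hxX t, hanti (Nat.zero_le t)⟩
  have hdist_sq : ∀ t, L * ‖xstar - x t‖ ^ 2 ≤ L * D ^ 2 := by
    intro t
    have := hdist t
    gcongr
  set a := L * D ^ 2 with ha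
  have ha0 : 0 ≤ a := by positivity
  have hbound : ∀ t, f (x (t + 1)) - f xstar ≤ a := by
    intro t
    have h1 := (abs_le.1 (abs_sub_linearization_le hXconv hdiff hsmooth (hxX t) hxstar)).1
    have h2 := hmodel t xstar hxstar
    have h3 := hdist_sq t
    linarith
  have hstep : ∀ t, ∀ s ∈ Set.Icc (0 : ℝ) 1, f (x (t + 1)) - f xstar ≤
      (f (x t) - f xstar) - s * (γ * (f (x t) - f xstar)) + s ^ 2 * a / 2 := by
    intro t s hs
    have h1 := hmodel t _ (hXconv.add_smul_sub_mem (hxX t) hxstar hs)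
    rw [add_sub_cancel_left, inner_smul_right, norm_smul, Real.norm_of_nonneg hs.1] at h1
    have h2 : ⟪f' (x t), xstar - x t⟫ ≤ -(γ * (f (x t) - f xstar)) := by
      have h := mul_le_mul_of_nonneg_left (hquasar _ (hxX t)) hγ0.le
      have h' : γ * (1 / γ * ⟪f' (x t), xstar - x t⟫) = ⟪f' (x t), xstar - x t⟫ := by
        field_simp
      linarith
    have h3 := mul_le_mul_of_nonneg_left h2 hs.1
    have h4 := mul_le_mul_of_nonneg_left (hdist_sq t) (sq_nonneg s)
    linarith
  intro t ht
  obtain ⟨k, rfl⟩ : ∃ k, t = k + 1 := ⟨t - 1, by omega⟩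
  rcases ha0.eq_or_lt with ha00 | hapos
  · have h0 : 20 * L * D ^ 2 = 0 := by linarith
    rw [h0, zero_div, ha00]
    exact hbound k
  have hrate : ∀ k : ℕ, γ ^ 2 / (2 * a) * (f (x (k + 1)) - f xstar) ≤ 1 / ((k : ℝ) + 2) := by
    intro k
    induction k with
    | zero =>
      have hγsq : γ ^ 2 ≤ 1 := pow_le_one₀ hγ0.le hγ1
      calc γ ^ 2 / (2 * a) * (f (x (0 + 1)) - f xstar) ≤ 1 / (2 * a) * a := by
            gcongr
            · exact sub_nonneg.2 (hmin _ (hxX _))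
            · exact hbound 0
        _ = 1 / (((0 : ℕ) : ℝ) + 2) := by
            field_simp
            simp
    | succ k ih =>
      have hδ0 : 0 ≤ f (x (k + 1)) - f xstar := sub_nonneg.2 (hmin _ (hxX _))
      have hδa := hbound k
      have h1 := hstep (k + 1) (γ * (f (x (k + 1)) - f xstar) / a)
        ⟨by positivity, by
          rw [div_le_one hapos]
          nlinarith⟩
      set δ := f (x (k + 1)) - f xstar
      have h2 : γ ^ 2 / (2 * a) * (f (x (k + 1 + 1)) - f xstar) ≤
          γ ^ 2 / (2 * a) * δ - (γ ^ 2 / (2 * a) * δ) ^ 2 := by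
        refine (mul_le_mul_of_nonneg_left h1 (by positivity)).trans (le_of_eq ?_)
        field_simp
        ring
      have h3 := sub_sq_le_one_div_succ (by linarith [k.cast_nonneg (α := ℝ)]) ih
      refine (h2.trans h3).trans (le_of_eq ?_)
      push_cast
      ring
  have h := hrate k
  have hk : (0 : ℝ) < k + 2 := by positivity
  have h20 : 20 * L * D ^ 2 = 20 * a := by rw [ha]; ring
  rw [h20, le_div_iff₀ (by positivity)]
  rw [div_mul_eq_mul_div, div_le_div_iff₀ (by positivity) hk] at h
  push_cast
  linarith
end

section
/- The function f(x) = (x² + 1/8)^{1/6} is (1/2)-quasar convex on [−5, 5] with center x* = 0: for every x ∈ [−5, 5], (x² + 1/8)^{1/6} − (1/8)^{1/6} ≤ (2/3)·x²·(x² + 1/8)^{−5/6}, where the right-hand side equals 2·x·f′(x). -/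
/-!
With `c = (1/8)^(1/6)` and `u = (x² + 1/8)^(1/6)`, so that `c ^ 6 = 1/8` and
`u ^ 6 = x² + 1/8`, multiplying the quasar-convexity inequality by `3 u ^ 5` turns it into
`u ^ 6 - 3 c u ^ 5 + 2 c ^ 6 ≤ 0`. The left side is
`(u - c) (u ^ 5 - 2 c (u ^ 4 + c u ^ 3 + c ^ 2 u ^ 2 + c ^ 3 u + c ^ 4))`, and the second factor is
nonpositive when `u ≤ (5/2) c`. On `[-5, 5]` this bound holds because
`(u / c) ^ 6 = 8 x² + 1 ≤ 201 < (5/2) ^ 6`.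
-/

/-- The polynomial form of the quasar-convexity inequality. -/
lemma quasar_poly {u c : ℝ} (hc : 0 < c) (hcu : c ≤ u) (hu : u ≤ 5 / 2 * c) :
    u ^ 6 - 3 * c * u ^ 5 + 2 * c ^ 6 ≤ 0 := by
  have hu0 : 0 < u := hc.trans_le hcu
  have h4 : 0 ≤ (5 / 2 * c - u) * u ^ 4 := mul_nonneg (by linarith) (by positivity)
  have h3 : 0 ≤ (5 / 2 * c - u) * (c * u ^ 3) := mul_nonneg (by linarith) (by positivity)
  have hfac : u ^ 5 - 2 * c * (u ^ 4 + c * u ^ 3 + c ^ 2 * u ^ 2 + c ^ 3 * u + c ^ 4) ≤ 0 := by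
    have : 0 ≤ c ^ 2 * u ^ 3 := by positivity
    have : 0 ≤ c ^ 3 * u ^ 2 := by positivity
    have : 0 ≤ c ^ 4 * u := by positivity
    have : 0 ≤ c ^ 5 := by positivity
    linarith
  have := mul_nonpos_of_nonneg_of_nonpos (sub_nonneg.2 hcu) hfac
  linarith

/-- `f(x) = (x² + 1/8)^{1/6}` is `(1/2)`-quasar convex on `[−5, 5]` with
center `x* = 0`: `0` minimizes `f` on `[−5,5]` and for every `x ∈ [−5, 5]`,
`(x² + 1/8)^{1/6} − (1/8)^{1/6} ≤ (2/3)·x²·(x² + 1/8)^{−5/6}` (the RHS is `2·x·f′(x)`). -/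
theorem example_quasar_convex :
    (∀ x ∈ Set.Icc (-5 : ℝ) 5,
      (((0 : ℝ) ^ 2 + 1 / 8) ^ ((1 : ℝ) / 6) : ℝ) ≤ (x ^ 2 + 1 / 8) ^ ((1 : ℝ) / 6)) ∧
    (∀ x ∈ Set.Icc (-5 : ℝ) 5,
      (x ^ 2 + 1 / 8) ^ ((1 : ℝ) / 6) - ((1 : ℝ) / 8) ^ ((1 : ℝ) / 6) ≤
        (2 / 3) * x ^ 2 * (x ^ 2 + 1 / 8) ^ (-(5 : ℝ) / 6)) := by
  constructor
  · intro x _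
    exact Real.rpow_le_rpow (by norm_num) (by nlinarith [sq_nonneg x]) (by norm_num)
  · rintro x ⟨hx1, hx2⟩
    have hy : 0 < x ^ 2 + 1 / 8 := by positivity
    have hx : x ^ 2 ≤ 25 := by nlinarith
    -- Writing `-5/6 = 1/6 - 1` leaves `1/6` as the only fractional exponent.
    rw [show (-(5 : ℝ) / 6) = 1 / 6 - 1 by norm_num, Real.rpow_sub_one hy.ne']
    have hpow : ∀ y : ℝ, 0 < y → (y ^ ((1 : ℝ) / 6)) ^ 6 = y := fun y hy0 => by
      rw [← Real.rpow_natCast, ← Real.rpow_mul hy0.le]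
      norm_num
    have hcu : ((1 : ℝ) / 8) ^ ((1 : ℝ) / 6) ≤ (x ^ 2 + 1 / 8) ^ ((1 : ℝ) / 6) :=
      Real.rpow_le_rpow (by norm_num) (by nlinarith [sq_nonneg x]) (by norm_num)
    have hc6 := hpow (1 / 8) (by norm_num)
    have hu6 := hpow _ hy
    have hc : (0 : ℝ) < (1 / 8 : ℝ) ^ ((1 : ℝ) / 6) := by positivity
    generalize ((1 : ℝ) / 8) ^ ((1 : ℝ) / 6) = c at *
    generalize (x ^ 2 + 1 / 8) ^ ((1 : ℝ) / 6) = u at *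
    have hu0 : 0 < u := hc.trans_le hcu
    have hu : u ≤ 5 / 2 * c := by
      refine le_of_pow_le_pow_left₀ (n := 6) (by norm_num) (by positivity) ?_
      rw [mul_pow, hc6, hu6]
      norm_num
      linarith
    have hpoly := mul_nonneg_of_nonpos_of_nonpos (quasar_poly hc hcu hu) (neg_nonpos.2 hu0.le)
    rw [show x ^ 2 = u ^ 6 - c ^ 6 by linarith, show u ^ 6 - c ^ 6 + 1 / 8 = u ^ 6 by linarith,
      ← mul_div_assoc, le_div_iff₀ (by positivity)]
    linarith
end

section
/- For every t in the interval I = [(1/8)^{1/6}, (201/8)^{1/6}], the function g(t) = (2/3)·t^{−5}·(t⁶ − 1/8) − t + (1/8)^{1/6} satisfies g(t) ≥ 0. (Moreover g″(t) = −(5/2)t^{−7} ≤ 0 on I, so g is concave on I and the claim reduces to checking the endpoints.) -/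
/-!
Write `a = (1/8)^{1/6}`, so `a⁶ = 1/8`. Instead of concavity, the proof uses the factorization
`3 t⁵ g(t) = -t⁶ + 3 a t⁵ - 2 a⁶ = (t - a) (-t⁵ + 2 a t⁴ + 2 a² t³ + 2 a³ t² + 2 a⁴ t + 2 a⁵)`.
The right endpoint satisfies `(201/8)^{1/6} ≤ (5/2) a` because `201 ≤ (5/2)⁶`, and for
`a ≤ t ≤ (5/2) a` both factors are nonnegative.
-/

/-- auxiliary inequality. For every `t` in
`I = [(1/8)^{1/6}, (201/8)^{1/6}]` one has
`g(t) = (2/3)·t⁻⁵·(t⁶ − 1/8) − t + (1/8)^{1/6} ≥ 0`. -/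
theorem auxiliary_inequality_quasar_example :
    ∀ t ∈ Set.Icc (((1 : ℝ) / 8) ^ ((1 : ℝ) / 6)) (((201 : ℝ) / 8) ^ ((1 : ℝ) / 6)),
      0 ≤ (2 / 3) * t ^ (-5 : ℤ) * (t ^ 6 - 1 / 8) - t + ((1 : ℝ) / 8) ^ ((1 : ℝ) / 6) := by
  rintro t ⟨hat, htb⟩
  have hroot : ∀ x : ℝ, 0 ≤ x → (x ^ ((1 : ℝ) / 6)) ^ 6 = x := by
    intro x hx
    rw [← Real.rpow_natCast, ← Real.rpow_mul hx]
    norm_num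
  have ha6 := hroot (1 / 8) (by norm_num)
  have hb6 := hroot (201 / 8) (by norm_num)
  have ha : 0 < ((1 : ℝ) / 8) ^ ((1 : ℝ) / 6) := by positivity
  generalize ((1 : ℝ) / 8) ^ ((1 : ℝ) / 6) = a at *
  generalize ((201 : ℝ) / 8) ^ ((1 : ℝ) / 6) = b at *
  have ht : 0 < t := ha.trans_le hat
  have hta : t ≤ 5 / 2 * a := by
    refine htb.trans (le_of_pow_le_pow_left₀ (n := 6) (by norm_num) (by positivity) ?_)
    rw [mul_pow, ha6, hb6]
    norm_num
  have hfactor : 0 ≤ -t ^ 5 + 2 * a * t ^ 4 + 2 * a ^ 2 * t ^ 3 + 2 * a ^ 3 * t ^ 2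
      + 2 * a ^ 4 * t + 2 * a ^ 5 := by
    -- `t⁵ - 2 a t⁴ ≤ (a/2) t⁴ ≤ (5/4) a² t³`, absorbed by the term `2 a² t³`.
    have h1 : 0 ≤ t ^ 4 * (5 / 2 * a - t) := mul_nonneg (by positivity) (by linarith)
    have h2 : 0 ≤ a * t ^ 3 * (5 / 2 * a - t) := mul_nonneg (by positivity) (by linarith)
    have h3 : 0 ≤ a ^ 2 * t ^ 3 := by positivity
    have h4 : 0 ≤ a ^ 3 * t ^ 2 := by positivity
    have h5 : 0 ≤ a ^ 4 * t := by positivity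
    have h6 : 0 ≤ a ^ 5 := by positivity
    linarith
  have hg : 2 / 3 * t ^ (-5 : ℤ) * (t ^ 6 - 1 / 8) - t + a
      = (t - a) * (-t ^ 5 + 2 * a * t ^ 4 + 2 * a ^ 2 * t ^ 3 + 2 * a ^ 3 * t ^ 2
        + 2 * a ^ 4 * t + 2 * a ^ 5) / (3 * t ^ 5) := by
    rw [← ha6, zpow_neg, show t ^ (5 : ℤ) = t ^ 5 by norm_cast]
    field_simp
    ring
  rw [hg]
  exact div_nonneg (mul_nonneg (by linarith) hfactor) (by positivity)
end

section
/- Let x₀ = −2 − (100/3)·(33/8)^{−5/6} and define g : ℝ → ℝ by g(x) = (x² + 1/8)^{1/6} + (1/100)·(x − x₀)². Then g′(−2) = 0 and g″(−2) < 0; in particular, g has a strict local maximum at x = −2 ∈ (−5, 5), so g is not γ-quasar convex on [−5, 5] for any γ ∈ (0, 1]. -/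
/-!
Writing `u = x² + 1/8`, one has `g'(x) = (x/3) u^(-5/6) + (x - x₀)/50` and
`g''(x) = u^(-5/6)/3 - (5/9) x² u^(-11/6) + 1/50`. The choice of `x₀` is exactly the one making
`g'(-2)` vanish, and `g''(-2) = 1/50 - (61/297) (33/8)^(-5/6)`, which is negative since
`(33/8)^(-5/6) ≥ (33/8)^(-1) = 8/33`. Thus `g'` changes sign from `+` to `-` at `-2`, which gives
the strict local maximum. The quasar-convexity inequality at the critical point `-2` would make
`-2` a global minimizer on `[-5, 5]`, contradicting the strict local maximum.
-/

/-- A strict form of the second derivative test. -/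
lemma strict_local_max_of_deriv_deriv_neg {g : ℝ → ℝ} {a : ℝ} (hd : Differentiable ℝ g)
    (h1 : deriv g a = 0) (h2 : deriv (deriv g) a < 0) :
    ∃ ε > (0 : ℝ), ∀ x : ℝ, x ≠ a → |x - a| < ε → g x < g a := by
  have hs := eventually_nhdsWithin_sign_eq_of_deriv_neg h2 h1
  obtain ⟨ε, hε, hs⟩ := Metric.eventually_nhds_iff.mp hs
  refine ⟨ε, hε, fun x hxa hx => ?_⟩
  have hx' := abs_lt.mp hx
  rcases lt_or_gt_of_ne hxa with hlt | hgt
  · have hmono : StrictMonoOn g (Set.Icc x a) := by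
      refine strictMonoOn_of_deriv_pos (convex_Icc x a) hd.continuous.continuousOn fun y hy => ?_
      rw [interior_Icc] at hy
      have hy' : dist y a < ε := by
        rw [Real.dist_eq, abs_lt]; constructor <;> linarith [hy.1, hy.2]
      have := hs hy'
      rwa [sign_pos (sub_pos.mpr hy.2), sign_eq_one_iff] at this
    exact hmono (Set.left_mem_Icc.mpr hlt.le) (Set.right_mem_Icc.mpr hlt.le) hlt
  · have hanti : StrictAntiOn g (Set.Icc a x) := by
      refine strictAntiOn_of_deriv_neg (convex_Icc a x) hd.continuous.continuousOn fun y hy => ?_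
      rw [interior_Icc] at hy
      have hy' : dist y a < ε := by
        rw [Real.dist_eq, abs_lt]; constructor <;> linarith [hy.1, hy.2]
      have := hs hy'
      rwa [sign_neg (sub_neg.mpr hy.1), sign_eq_neg_one_iff] at this
    exact hanti (Set.left_mem_Icc.mpr hgt.le) (Set.right_mem_Icc.mpr hgt.le) hgt

/-- the proximal subproblem of a quasar-convex function need not be
quasar convex. With `x₀ = −2 − (100/3)·(33/8)^{−5/6}` and
`g(x) = (x² + 1/8)^{1/6} + (1/100)(x − x₀)²`, one has `g′(−2) = 0` and `g″(−2) < 0`;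
in particular `g` has a strict local maximum at `−2 ∈ (−5, 5)`, so `g` is not
`γ`-quasar convex on `[−5, 5]` for any `γ ∈ (0, 1]`. -/
theorem prox_subproblem_not_quasar_convex
    (x₀ : ℝ) (hx₀ : x₀ = -2 - (100 / 3) * ((33 : ℝ) / 8) ^ (-(5 : ℝ) / 6))
    (g : ℝ → ℝ)
    (hg : ∀ x : ℝ, g x = (x ^ 2 + 1 / 8) ^ ((1 : ℝ) / 6) + (1 / 100) * (x - x₀) ^ 2) :
    deriv g (-2) = 0 ∧
    deriv (deriv g) (-2) < 0 ∧
    (∃ ε > (0 : ℝ), ∀ x : ℝ, x ≠ -2 → |x - (-2)| < ε → g x < g (-2)) ∧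
    (∀ γ ∈ Set.Ioc (0 : ℝ) 1,
      ¬ ∃ xs ∈ Set.Icc (-5 : ℝ) 5,
        (∀ x ∈ Set.Icc (-5 : ℝ) 5, g xs ≤ g x) ∧
        (∀ x ∈ Set.Icc (-5 : ℝ) 5,
          g x + (1 / γ) * deriv g x * (xs - x) ≤ g xs)) := by
  have hu : ∀ x : ℝ, HasDerivAt (fun x : ℝ => x ^ 2 + 1 / 8) (2 * x) x := fun x => by
    simpa using (hasDerivAt_pow 2 x).add_const (1 / 8 : ℝ)
  have hpos : ∀ x : ℝ, (0 : ℝ) < x ^ 2 + 1 / 8 := fun x => by positivity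
  have hd1 : ∀ x : ℝ, HasDerivAt g
      (1 / 3 * x * (x ^ 2 + 1 / 8) ^ (-(5 : ℝ) / 6) + 1 / 50 * (x - x₀)) x := fun x => by
    rw [funext hg]
    have h := ((hu x).rpow_const (p := (1 : ℝ) / 6) (Or.inl (hpos x).ne')).add
      ((((hasDerivAt_id x).sub_const x₀).pow 2).const_mul (1 / 100 : ℝ))
    refine h.congr_deriv ?_
    rw [show (1 : ℝ) / 6 - 1 = -(5 : ℝ) / 6 by norm_num]
    simp only [id]
    push_cast
    ring
  have hdg : deriv g = fun x : ℝ =>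
      1 / 3 * x * (x ^ 2 + 1 / 8) ^ (-(5 : ℝ) / 6) + 1 / 50 * (x - x₀) :=
    funext fun x => (hd1 x).deriv
  have hd2 : HasDerivAt (deriv g)
      (1 / 3 * ((33 : ℝ) / 8) ^ (-(5 : ℝ) / 6)
        - 20 / 9 * ((33 : ℝ) / 8) ^ (-(5 : ℝ) / 6 - 1) + 1 / 50) (-2) := by
    rw [hdg]
    have h := (((hasDerivAt_id (-2 : ℝ)).const_mul (1 / 3 : ℝ)).mul
      ((hu (-2)).rpow_const (p := -(5 : ℝ) / 6) (Or.inl (hpos (-2)).ne'))).add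
      (((hasDerivAt_id (-2 : ℝ)).sub_const x₀).const_mul (1 / 50 : ℝ))
    refine h.congr_deriv ?_
    rw [show ((-2 : ℝ)) ^ 2 + 1 / 8 = 33 / 8 by norm_num]
    simp only [id]
    ring
  have h1 : deriv g (-2) = 0 := by
    rw [hdg]
    simp only
    rw [show ((-2 : ℝ)) ^ 2 + 1 / 8 = 33 / 8 by norm_num, hx₀]
    ring
  have h2 : deriv (deriv g) (-2) < 0 := by
    rw [hd2.deriv, Real.rpow_sub_one (by norm_num)]
    have hA : ((33 : ℝ) / 8) ^ (-1 : ℝ) ≤ ((33 : ℝ) / 8) ^ (-(5 : ℝ) / 6) :=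
      Real.rpow_le_rpow_of_exponent_le (by norm_num) (by norm_num)
    rw [Real.rpow_neg_one] at hA
    norm_num at hA ⊢
    linarith
  have h3 := strict_local_max_of_deriv_deriv_neg (fun x => (hd1 x).differentiableAt) h1 h2
  refine ⟨h1, h2, h3, ?_⟩
  rintro γ - ⟨xs, -, hmin, hq⟩
  obtain ⟨ε, hε, h3⟩ := h3
  have hle : g (-2) ≤ g xs := by
    have := hq (-2) (by constructor <;> norm_num)
    rw [h1] at this
    linarith
  -- a point within `ε` to the right of `-2` that stays inside `[-5, 5]`
  have hδ : 0 < min (ε / 2) 1 := by positivity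
  have hδ1 := min_le_left (ε / 2) 1
  have hδ2 := min_le_right (ε / 2) 1
  have hlt := h3 (-2 + min (ε / 2) 1) (by linarith) (by
    rw [show -2 + min (ε / 2) 1 - -2 = min (ε / 2) 1 by ring, abs_of_pos hδ]; linarith)
  have := hmin (-2 + min (ε / 2) 1) ⟨by linarith, by linarith⟩
  linarith
end
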